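/- Let n ≥ 3. If a social choice function f : S₀ⁿ → A is onto and pairwise strategy-proof, then f is tops-only. -/

import Mathlib

/-- The set of alternatives: the closed interval [0,1]. -/
abbrev A : Type := Set.Icc (0:ℝ) 1

def zeroA : A := ⟨0, by constructor <;> norm_num⟩
def oneA : A := ⟨1, by constructor <;> norm_num⟩

/-- A preference: a complete (total) and transitive binary relation on A. -/
structure Pref : Type where
  rel : A → A → Prop
  total : ∀ a b : A, rel a b ∨ rel b a
  trans : ∀ a b c : A, rel a b → rel b c → rel a c

/-- Strict part of a preference. -/
def Pref.P (R : Pref) (a b : A) : Prop := R.rel a b ∧ ¬ R.rel b a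

/-- `p` is a peak of `R`: `R` is single-peaked with peak `p`. -/
def Pref.IsPeak (R : Pref) (p : A) : Prop :=
  ∀ a b : A, ((p ≤ a ∧ a < b) ∨ (b < a ∧ a ≤ p)) → R.P a b

/-- Single-peaked preferences. -/
def SinglePeaked (R : Pref) : Prop := ∃ p : A, R.IsPeak p

/-- The completely indifferent preference R⁰. -/
def R0 : Pref :=
  ⟨fun _ _ => True, fun _ _ => Or.inl trivial, fun _ _ _ _ _ => trivial⟩

/-- The augmented domain S₀ = S ∪ {R⁰}. -/
def S0 : Type := {R : Pref // SinglePeaked R ∨ R = R0}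

/-- The completely indifferent profile R^{0N}. -/
def indiffProfile (n : ℕ) : Fin n → S0 := fun _ => ⟨R0, Or.inr rfl⟩

open Classical in
/-- The peak of a single-peaked preference (junk value `zeroA` otherwise). -/
noncomputable def peak (R : Pref) : A :=
  if h : SinglePeaked R then h.choose else zeroA

/-- τ̲(R): the smallest peak among non-indifferent agents (as a real number). -/
noncomputable def tmin {n : ℕ} (R : Fin n → S0) : ℝ :=
  sInf {x : ℝ | ∃ i : Fin n, (R i).1 ≠ R0 ∧ ((peak (R i).1 : ℝ) = x)}

/-- τ̄(R): the largest peak among non-indifferent agents (as a real number). -/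
noncomputable def tmax {n : ℕ} (R : Fin n → S0) : ℝ :=
  sSup {x : ℝ | ∃ i : Fin n, (R i).1 ≠ R0 ∧ ((peak (R i).1 : ℝ) = x)}

/-- Onto-ness. -/
def Onto {n : ℕ} (f : (Fin n → S0) → A) : Prop := ∀ a : A, ∃ R : Fin n → S0, f R = a

/-- (Individual) strategy-proofness. -/
def StrategyProof {n : ℕ} (f : (Fin n → S0) → A) : Prop :=
  ∀ (R : Fin n → S0) (i : Fin n) (Ri' : S0),
    (R i).1.rel (f R) (f (Function.update R i Ri'))

/-- No profitable deviation by the coalition `S`. -/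
def CoalitionSP {n : ℕ} (f : (Fin n → S0) → A) (S : Finset (Fin n)) : Prop :=
  ¬ ∃ R R' : Fin n → S0,
      (∀ i ∉ S, R' i = R i) ∧
      (∀ i ∈ S, (R i).1.rel (f R') (f R)) ∧
      (∃ j ∈ S, (R j).1.P (f R') (f R))

/-- Group strategy-proofness. -/
def GroupSP {n : ℕ} (f : (Fin n → S0) → A) : Prop :=
  ∀ S : Finset (Fin n), S.Nonempty → CoalitionSP f S

/-- Pairwise strategy-proofness. -/
def PairwiseSP {n : ℕ} (f : (Fin n → S0) → A) : Prop :=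
  ∀ S : Finset (Fin n), S.Nonempty → S.card ≤ 2 → CoalitionSP f S

/-- No deviation making every member of `S` strictly better off. -/
def WeakCoalitionSP {n : ℕ} (f : (Fin n → S0) → A) (S : Finset (Fin n)) : Prop :=
  ¬ ∃ R R' : Fin n → S0,
      (∀ i ∉ S, R' i = R i) ∧
      (∀ i ∈ S, (R i).1.P (f R') (f R))

/-- Weak group strategy-proofness. -/
def WeakGroupSP {n : ℕ} (f : (Fin n → S0) → A) : Prop :=
  ∀ S : Finset (Fin n), S.Nonempty → WeakCoalitionSP f S

/-- `a` is efficient at the profile `R`. -/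
def EfficientAt {n : ℕ} (R : Fin n → S0) (a : A) : Prop :=
  ¬ ∃ b : A, b ≠ a ∧ (∀ i : Fin n, (R i).1.rel b a) ∧ (∃ j : Fin n, (R j).1.P b a)

/-- Efficiency of a social choice function. -/
def Efficient {n : ℕ} (f : (Fin n → S0) → A) : Prop := ∀ R : Fin n → S0, EfficientAt R (f R)

/-- The tops-only property. -/
def TopsOnly {n : ℕ} (f : (Fin n → S0) → A) : Prop :=
  ∀ R R' : Fin n → S0,
    (∀ i : Fin n, (R i).1 = R0 ↔ (R' i).1 = R0) →
    (∀ i : Fin n, (R i).1 ≠ R0 → peak (R i).1 = peak (R' i).1) →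
    f R = f R'

/-- Target rules with a default. -/
def IsTargetRule {n : ℕ} (f : (Fin n → S0) → A) : Prop :=
  ∃ x y : A, f (indiffProfile n) = y ∧
    ∀ R : Fin n → S0, R ≠ indiffProfile n →
      ((tmin R ≤ (x : ℝ) ∧ (x : ℝ) ≤ tmax R) → f R = x) ∧
      ((x : ℝ) < tmin R → (f R : ℝ) = tmin R) ∧
      (tmax R < (x : ℝ) → (f R : ℝ) = tmax R)

/-!
Freeze the reports outside a nonempty coalition `T` and consider the set of outcomes that `T` can
reach. If everyone outside `T` is indifferent, this set is all of `A`, by unanimity.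
If `j` is not indifferent, convexity of the set for `insert j T` passes to `T`: suppose `q` lies
between two options of `T`, with the peak of `j` at or below `q`, and let the members of `T` report
a preference with peak `q` that ranks everything above `q` over everything below. They obtain some
`d ≥ q`, whereas with `j` joining in they obtain `q`; were
`d > q`, joining would profit `j`, so `d = q` is an option of `T`.
Hence the options of a single agent form a convex set, and the best one for a single-peaked
preference depends only on the peak.
-/

namespace Pref

theorem rel_refl (R : Pref) (a : A) : R.rel a a := (R.total a a).elim id id

namespace IsPeak

variable {R R' : Pref} {p a b : A}

theorem le_of_rel (hp : R.IsPeak p) (hab : R.rel a b) (hb : p ≤ b) : a ≤ b :=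
  not_lt.1 fun hlt => (hp b a (Or.inl ⟨hb, hlt⟩)).2 hab

theorem ge_of_rel (hp : R.IsPeak p) (hab : R.rel a b) (hb : b ≤ p) : b ≤ a :=
  not_lt.1 fun hlt => (hp b a (Or.inr ⟨hlt, hb⟩)).2 hab

theorem eq_of_rel (hp : R.IsPeak p) (ha : R.rel a p) : a = p :=
  le_antisymm (hp.le_of_rel ha le_rfl) (hp.ge_of_rel ha le_rfl)

theorem rel (hp : R.IsPeak p) (a : A) : R.rel p a := by
  rcases lt_trichotomy a p with ha | rfl | ha
  · exact (hp p a (Or.inr ⟨ha, le_rfl⟩)).1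
  · exact R.rel_refl a
  · exact (hp p a (Or.inl ⟨le_rfl, ha⟩)).1

theorem eq_of_forall_rel_of_ordConnected (hR : R.IsPeak p) (hR' : R'.IsPeak p) {s : Set A}
    (hs : s.OrdConnected) {x y : A} (hx : x ∈ s) (hy : y ∈ s)
    (hxs : ∀ z ∈ s, R.rel x z) (hys : ∀ z ∈ s, R'.rel y z) : x = y := by
  wlog hxy : x ≤ y generalizing R R' x y
  · exact (this hR' hR hy hx hys hxs (le_of_not_ge hxy)).symm
  rcases le_total p x with hpx | hxp
  · exact le_antisymm hxy (hR'.le_of_rel (hys x hx) hpx)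
  rcases le_total y p with hyp | hpy
  · exact le_antisymm hxy (hR.ge_of_rel (hxs y hy) hyp)
  have hps : p ∈ s := hs.out hx hy ⟨hxp, hpy⟩
  exact (hR.eq_of_rel (hxs p hps)).trans (hR'.eq_of_rel (hys p hps)).symm

end IsPeak

/-- The preference represented by the utility function `u`. -/
def ofUtility (u : A → ℝ) : Pref where
  rel a b := u b ≤ u a
  total a b := le_total (u b) (u a)
  trans _ _ _ hab hbc := hbc.trans hab

/-- The preference by distance to `q`, except that elements of `s` get a bonus of `1`, the length
of `A`, so that they all rank above the alternatives outside `s` once `q ∈ s`. -/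
noncomputable def tilted (s : Set A) (q : A) : Pref :=
  ofUtility fun x => s.indicator 1 x - dist x q

variable {s : Set A} {q : A}

theorem isPeak_tilted (hs : s.OrdConnected) (hq : q ∈ s) : (tilted s q).IsPeak q := by
  intro a b hab
  have hmem : b ∈ s → a ∈ s := by
    rcases hab with ⟨hqa, hab⟩ | ⟨hba, haq⟩
    · exact fun hb => hs.out hq hb ⟨hqa, hab.le⟩
    · exact fun hb => hs.out hb hq ⟨hba.le, haq⟩
  have hbonus : s.indicator (1 : A → ℝ) b ≤ s.indicator 1 a := by
    by_cases hb : b ∈ s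
    · simp [hb, hmem hb]
    · rw [Set.indicator_of_notMem hb]
      exact Set.indicator_nonneg (fun _ _ => zero_le_one) a
  have hdist : dist a q < dist b q := by
    rw [Subtype.dist_eq, Subtype.dist_eq, Real.dist_eq, Real.dist_eq]
    rcases hab with ⟨(hqa : (q : ℝ) ≤ a), (hab : (a : ℝ) < b)⟩ |
      ⟨(hba : (b : ℝ) < a), (haq : (a : ℝ) ≤ q)⟩
    · rw [abs_of_nonneg (sub_nonneg.2 hqa), abs_of_nonneg (sub_nonneg.2 (hqa.trans hab.le))]
      exact sub_lt_sub_right hab _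
    · rw [abs_of_nonpos (sub_nonpos.2 haq), abs_of_nonpos (sub_nonpos.2 (hba.le.trans haq))]
      exact neg_lt_neg (sub_lt_sub_right hba _)
  have hlt := add_lt_add_of_le_of_lt hbonus (neg_lt_neg hdist)
  exact ⟨hlt.le, hlt.not_ge⟩

theorem mem_of_tilted_rel (hq : q ∈ s) {a c : A} (ha : a ∈ s) (h : (tilted s q).rel c a) :
    c ∈ s := by
  by_contra hc
  have hle : 1 - dist a q ≤ -dist c q := by simpa [tilted, ofUtility, ha, hc] using h
  have haq : dist a q ≤ 1 := (Real.dist_le_of_mem_Icc a.2 q.2).trans_eq (sub_zero 1)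
  have hcq : 0 < dist c q := dist_pos.2 fun hcq => hc (hcq ▸ hq)
  linarith

end Pref

theorem S0.isPeak_peak (R : S0) (hR : R.1 ≠ R0) : R.1.IsPeak (peak R.1) := by
  have hsp : SinglePeaked R.1 := R.2.resolve_right hR
  rw [peak, dif_pos hsp]
  exact hsp.choose_spec

variable {n : ℕ} {f : (Fin n → S0) → A} {R : Fin n → S0} {T : Finset (Fin n)}

theorem PairwiseSP.apply_update_eq (hf : PairwiseSP f) (j : Fin n) {V : S0}
    (hV : ∀ a, V.1.rel (f R) a) (k : Fin n)
    (hk : (Function.update R j V k).1.IsPeak (f R)) : f (Function.update R j V) = f R := by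
  by_contra hne
  refine hf {j, k} (by simp) Finset.card_le_two
    ⟨Function.update R j V, R, fun i hi => ?_, fun i hi => ?_, k, by simp, hk.rel _,
      fun h => hne (hk.eq_of_rel h)⟩
  · have hij : i ≠ j := fun h => hi (by simp [h])
    simp [hij]
  · rcases Finset.mem_insert.1 hi with rfl | hik
    · simpa using hV _
    · rw [Finset.mem_singleton.1 hik]
      exact hk.rel _

theorem PairwiseSP.apply_eq_of_forall_rel (hf : PairwiseSP f) (hOnto : Onto f) {q : A}
    (hR : ∀ i a, (R i).1.rel q a) {k : Fin n} (hk : (R k).1.IsPeak q) : f R = q := by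
  obtain ⟨Q, rfl⟩ := hOnto q
  have hT : ∀ T : Finset (Fin n), f ((insert k T).piecewise R Q) = f Q := by
    intro T
    induction T using Finset.induction_on with
    | empty =>
      rw [insert_empty_eq, Finset.piecewise_singleton]
      exact hf.apply_update_eq k (hR k) k (by simpa using hk)
    | insert j T _ ih =>
      rw [Finset.insert_comm, Finset.piecewise_insert, ← ih]
      refine hf.apply_update_eq j (by simpa only [ih] using hR j) k ?_
      rw [← Finset.piecewise_insert, Finset.piecewise_eq_of_mem _ _ _ (by simp), ih]
      exact hk
  rw [← hT Finset.univ, Finset.insert_eq_of_mem (Finset.mem_univ k), Finset.piecewise_univ]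

theorem PairwiseSP.strategyProof (hf : PairwiseSP f) : StrategyProof f := by
  intro R i V
  by_contra hrel
  have hrel' := ((R i).1.total _ _).resolve_left hrel
  refine hf {i} (by simp) (by simp)
    ⟨R, Function.update R i V, fun k hk => ?_, fun k hk => ?_, i, by simp, hrel', hrel⟩
  · exact Function.update_of_ne (by simpa using hk) _ _
  · rwa [Finset.mem_singleton.1 hk]

theorem StrategyProof.rel_piecewise_const (hf : StrategyProof f) (V : S0) (T : Finset (Fin n))
    (R : Fin n → S0) : V.1.rel (f (T.piecewise (fun _ => V) R)) (f R) := by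
  induction T using Finset.induction_on with
  | empty => simpa using V.1.rel_refl _
  | insert j T _ ih =>
    rw [Finset.piecewise_insert]
    refine V.1.trans _ _ _ ?_ ih
    simpa using hf (Function.update (T.piecewise (fun _ => V) R) j V) j
      (T.piecewise (fun _ => V) R j)

theorem StrategyProof.rel_piecewise_insert (hf : StrategyProof f) (V : S0) (R : Fin n → S0)
    (T : Finset (Fin n)) (j : Fin n) :
    (R j).1.rel (f (T.piecewise (fun _ => V) R)) (f ((insert j T).piecewise (fun _ => V) R)) := by
  by_cases hj : j ∈ T
  · rw [Finset.insert_eq_of_mem hj]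
    exact Pref.rel_refl _ _
  · rw [Finset.piecewise_insert]
    simpa [hj] using hf (T.piecewise (fun _ => V) R) j V

/-- The option set of the coalition `T` at `R`: the outcomes its members can reach by joint
misreports while the other agents report as in `R`. -/
def optionSet (f : (Fin n → S0) → A) (R : Fin n → S0) (T : Finset (Fin n)) : Set A :=
  f '' {Q | ∀ i ∉ T, Q i = R i}

theorem apply_piecewise_mem_optionSet (f : (Fin n → S0) → A) (Q R : Fin n → S0)
    (T : Finset (Fin n)) : f (T.piecewise Q R) ∈ optionSet f R T :=
  ⟨_, fun _ hi => Finset.piecewise_eq_of_notMem _ _ _ hi, rfl⟩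

theorem optionSet_mono {U : Finset (Fin n)} (hTU : T ⊆ U) : optionSet f R T ⊆ optionSet f R U :=
  Set.image_mono fun _ hQ i hi => hQ i fun hiT => hi (hTU hiT)

theorem StrategyProof.rel_of_mem_optionSet (hf : StrategyProof f) (V : S0) {a : A}
    (ha : a ∈ optionSet f R T) : V.1.rel (f (T.piecewise (fun _ => V) R)) a := by
  obtain ⟨Q, hQ, rfl⟩ := ha
  have hQR : T.piecewise (fun _ => V) R = T.piecewise (fun _ => V) Q :=
    T.piecewise_congr (fun _ _ => rfl) fun i hi => (hQ i hi).symm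
  rw [hQR]
  exact hf.rel_piecewise_const V T Q

theorem PairwiseSP.optionSet_eq_univ (hf : PairwiseSP f) (hOnto : Onto f) (hT : T.Nonempty)
    (hR : ∀ i ∉ T, (R i).1 = R0) : optionSet f R T = Set.univ := by
  obtain ⟨k, hk⟩ := hT
  refine Set.eq_univ_of_forall fun q => ?_
  have hpeak := Pref.isPeak_tilted Set.ordConnected_univ (Set.mem_univ q)
  let V : S0 := ⟨Pref.tilted Set.univ q, Or.inl ⟨q, hpeak⟩⟩
  have hq : f (T.piecewise (fun _ => V) R) = q := by
    refine hf.apply_eq_of_forall_rel hOnto (fun i a => ?_) (k := k) (by simpa [hk] using hpeak)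
    by_cases hi : i ∈ T
    · simpa [hi] using hpeak.rel a
    · simp [hi, hR, R0]
  exact hq ▸ apply_piecewise_mem_optionSet f _ R T

theorem StrategyProof.mem_optionSet_of_mem_insert (hf : StrategyProof f) {j : Fin n} {s : Set A}
    (hs : s.OrdConnected) {b q : A} (hqs : q ∈ s) (hbs : b ∈ s) (hb : b ∈ optionSet f R T)
    (hq : q ∈ optionSet f R (insert j T)) (hj : ∀ d ∈ s, (R j).1.rel d q → d = q) :
    q ∈ optionSet f R T := by
  have hpeak := Pref.isPeak_tilted hs hqs
  let V : S0 := ⟨Pref.tilted s q, Or.inl ⟨q, hpeak⟩⟩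
  have hd : f (T.piecewise (fun _ => V) R) ∈ s :=
    Pref.mem_of_tilted_rel hqs hbs (hf.rel_of_mem_optionSet V hb)
  have hjoin : f ((insert j T).piecewise (fun _ => V) R) = q :=
    hpeak.eq_of_rel (hf.rel_of_mem_optionSet V hq)
  have hdq := hj _ hd (hjoin ▸ hf.rel_piecewise_insert V R T j)
  exact hdq ▸ apply_piecewise_mem_optionSet f _ R T

theorem StrategyProof.ordConnected_optionSet_of_insert (hf : StrategyProof f) {j : Fin n}
    (hj : (R j).1 ≠ R0) (hins : (optionSet f R (insert j T)).OrdConnected) :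
    (optionSet f R T).OrdConnected := by
  refine ⟨fun a ha b hb q ⟨haq, hqb⟩ => ?_⟩
  have hsub : optionSet f R T ⊆ optionSet f R (insert j T) :=
    optionSet_mono (Finset.subset_insert j T)
  have hq := hins.out (hsub ha) (hsub hb) ⟨haq, hqb⟩
  have hp := (R j).isPeak_peak hj
  rcases le_total (peak (R j).1) q with hpq | hqp
  · exact hf.mem_optionSet_of_mem_insert Set.ordConnected_Ici Set.self_mem_Ici hqb hb hq
      fun d hqd hrel => le_antisymm (hp.le_of_rel hrel hpq) hqd
  · exact hf.mem_optionSet_of_mem_insert Set.ordConnected_Iic Set.self_mem_Iic haq ha hq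
      fun d hdq hrel => le_antisymm hdq (hp.ge_of_rel hrel hqp)

theorem PairwiseSP.ordConnected_optionSet (hf : PairwiseSP f) (hOnto : Onto f)
    (hT : T.Nonempty) : (optionSet f R T).OrdConnected := by
  classical
  have hdescend : ∀ K : Finset (Fin n), (∀ k ∈ K, (R k).1 ≠ R0) →
      (optionSet f R (K ∪ T)).OrdConnected → (optionSet f R T).OrdConnected := by
    intro K
    induction K using Finset.induction_on with
    | empty =>
      rw [Finset.empty_union]
      exact fun _ h => h
    | insert j K _ ih =>
      intro hK h
      rw [Finset.insert_union] at h
      exact ih (fun k hk => hK k (Finset.mem_insert_of_mem hk))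
        (hf.strategyProof.ordConnected_optionSet_of_insert (hK j (Finset.mem_insert_self j K)) h)
  refine hdescend {k | (R k).1 ≠ R0} (by simp) ?_
  rw [hf.optionSet_eq_univ hOnto (hT.mono Finset.subset_union_right) fun i hi => ?_]
  · exact Set.ordConnected_univ
  · by_contra hi0
    exact hi (by simp [hi0])

theorem PairwiseSP.apply_update_eq_of_peak_eq (hf : PairwiseSP f) (hOnto : Onto f) {i : Fin n}
    {V : S0} (hi : (R i).1 ≠ R0) (hV : V.1 ≠ R0) (hpeak : peak (R i).1 = peak V.1) :
    f (Function.update R i V) = f R := by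
  have hbest : ∀ W : S0, ∀ a ∈ optionSet f R {i}, W.1.rel (f (Function.update R i W)) a := by
    intro W a ha
    simpa only [Finset.piecewise_singleton] using hf.strategyProof.rel_of_mem_optionSet W ha
  have hmem : ∀ W : S0, f (Function.update R i W) ∈ optionSet f R {i} := by
    intro W
    simpa only [Finset.piecewise_singleton] using
      apply_piecewise_mem_optionSet f (fun _ => W) R {i}
  have hVR := (V.isPeak_peak hV).eq_of_forall_rel_of_ordConnected
    (hpeak ▸ (R i).isPeak_peak hi) (hf.ordConnected_optionSet hOnto (Finset.singleton_nonempty i))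
    (hmem V) (hmem (R i)) (hbest V) (hbest (R i))
  rwa [Function.update_eq_self] at hVR

theorem stmt_7_general (n : ℕ) (f : (Fin n → S0) → A) (hOnto : Onto f) (hPSP : PairwiseSP f) :
    TopsOnly f := by
  intro R R' hindiff hpeak
  have hT : ∀ T : Finset (Fin n), f (T.piecewise R' R) = f R := by
    intro T
    induction T using Finset.induction_on with
    | empty => rw [Finset.piecewise_empty]
    | insert j T hj ih =>
      have hRj : T.piecewise R' R j = R j := Finset.piecewise_eq_of_notMem _ _ _ hj
      rw [Finset.piecewise_insert, ← ih]
      by_cases hR0 : (R j).1 = R0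
      · have hsame : R' j = R j := Subtype.ext (((hindiff j).1 hR0).trans hR0.symm)
        rw [hsame, ← hRj, Function.update_eq_self]
      · exact hPSP.apply_update_eq_of_peak_eq hOnto (hRj ▸ hR0) (mt (hindiff j).2 hR0)
          (hRj ▸ hpeak j hR0)
  simpa using (hT Finset.univ).symm

/-- For n ≥ 3, every onto and pairwise strategy-proof SCF is
tops-only. -/
theorem stmt_7 (n : ℕ) (hn : 3 ≤ n) (f : (Fin n → S0) → A)
    (hOnto : Onto f) (hPSP : PairwiseSP f) : TopsOnly f :=
  stmt_7_general n f hOnto hPSP
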